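/- Let G be a finite simple chordal graph that is P_9-free, IR an irredundant set of G, A ∈ D_RN(G), and I ⊆ IR. Then A ∪ I is a minimal dominating set of G (i.e., I is an irredundant extension of A) if and only if for every irredundant component C_i of G, the set D_i = I ∩ C_i is inclusion-minimal among the subsets D of C_i satisfying both: D dominates C_i \ N(A), and D does not dominate Priv_IR(A,x) for any x ∈ R_i(A). -/

import Mathlib

variable {V : Type*}

/-- The closed neighborhood `N[x]` of a vertex. -/
def cnbr (G : SimpleGraph V) (x : V) : Set V := insert x (G.neighborSet x)

/-- `N[X] = ⋃ x ∈ X, N[x]`. -/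
def cnbrSet (G : SimpleGraph V) (X : Set V) : Set V := ⋃ x ∈ X, cnbr G x

/-- `N(X) = N[X] \ X`. -/
def onbrSet (G : SimpleGraph V) (X : Set V) : Set V := cnbrSet G X \ X

/-- `D` dominates `X` if `X ⊆ N[D]`. -/
def Dominates (G : SimpleGraph V) (D X : Set V) : Prop := X ⊆ cnbrSet G D

/-- `D` is a minimal dominating set of `G`. -/
def IsMinDomSet (G : SimpleGraph V) (D : Set V) : Prop :=
  Dominates G D Set.univ ∧ ∀ D' : Set V, D' ⊂ D → ¬ Dominates G D' Set.univ

/-- `Priv(D, x)`: private neighbors of `x` w.r.t. `D`. -/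
def priv (G : SimpleGraph V) (D : Set V) (x : V) : Set V := {u | cnbr G u ∩ D = {x}}

/-- `IR` is an irredundant set of `G`. -/
def IsIrredundantSet (G : SimpleGraph V) (IR : Set V) : Prop :=
  (∀ v : V, ∃ x ∈ IR, cnbr G x ⊆ cnbr G v) ∧
  (∀ x ∈ IR, ∀ v : V, ¬ cnbr G v ⊂ cnbr G x) ∧
  (∀ x ∈ IR, ∀ y ∈ IR, x ≠ y → cnbr G x ≠ cnbr G y)

/-- `Priv_IR(D, x) = Priv(D, x) ∩ IR`. -/
def privIR (G : SimpleGraph V) (IR D : Set V) (x : V) : Set V := priv G D x ∩ IR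

/-- `A ∈ D_RN(G)`: `A` is the intersection of a minimal dominating set with `RN = V \ IR`. -/
def memDRN (G : SimpleGraph V) (IR A : Set V) : Prop :=
  ∃ D : Set V, IsMinDomSet G D ∧ A = D ∩ IRᶜ

/-- `G` is `P_k`-free: it has no induced path on `k` vertices. -/
def PkFree (G : SimpleGraph V) (k : ℕ) : Prop :=
  ¬ ∃ f : Fin k → V, Function.Injective f ∧
      ∀ i j : Fin k, G.Adj (f i) (f j) ↔ (i.val + 1 = j.val ∨ j.val + 1 = i.val)

/-- `G` is chordal: no induced cycle on `n ≥ 4` vertices. -/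
def Chordal (G : SimpleGraph V) : Prop :=
  ∀ n : ℕ, 4 ≤ n → ¬ ∃ f : ZMod n → V, Function.Injective f ∧
      ∀ i j : ZMod n, G.Adj (f i) (f j) ↔ (i = j + 1 ∨ j = i + 1)

/-- `C` is a connected component of the subgraph of `G` induced by `S`. -/
def IsCompOf (G : SimpleGraph V) (S C : Set V) : Prop :=
  C ⊆ S ∧ C.Nonempty ∧ (G.induce C).Connected ∧
    ∀ x ∈ C, ∀ y ∈ S, G.Adj x y → y ∈ C

/-- `B(A)`: the elements of `A` having an irredundant private neighbor in some irredundant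
component entirely contained in `N(A)`. -/
def Bset (G : SimpleGraph V) (IR A : Set V) : Set V :=
  {a ∈ A | ∃ C : Set V, IsCompOf G IR C ∧ C ⊆ onbrSet G A ∧ (privIR G IR A a ∩ C).Nonempty}

/-- Domination inside the subgraph induced by `C`: every `u ∈ X` equals, or is adjacent
(within `C`) to, some `d ∈ D`.  For `D, X ⊆ C` this is domination in `G[C]`. -/
def domIn (G : SimpleGraph V) (C D X : Set V) : Prop :=
  ∀ u ∈ X, ∃ d ∈ D, u = d ∨ (G.Adj d u ∧ d ∈ C ∧ u ∈ C)

/-!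
Since every closed neighborhood contains that of an irredundant vertex, `A ∪ I` is a minimal
dominating set iff `I` is minimal among the sets dominating `IR \ N(A)` and, for each `a ∈ A`,
does not dominate `Priv_IR(A, a)`. The first condition splits over the irredundant components.
If `a ∈ B(A)`, the second follows from the first: some component `C ⊆ N(A)` meets
`Priv_IR(A, a)`, and minimality forces `I ∩ C = ∅`. If `a ∈ R(A)`, it becomes local as well,
because `Priv_IR(A, a)` lies in a single component.

Indeed `a ∈ R(A)` has both a neighbor and a nonneighbor in every component meeting `Priv_IR(A, a)`.
Irredundant vertices have incomparable closed neighborhoods, so for such a component `C` an arm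
`a, p, q` with `p, q ∈ C` and `a ≁ q` prolongs to a path on five vertices without chords at distance
two. Two such arms, into different components, would join at `a` to a path on nine vertices with
the same property, and in a chordal graph such a path is induced.
-/

section Domination

variable {G : SimpleGraph V} {A D D' E I X Y : Set V} {u v x : V}

theorem mem_cnbr : v ∈ cnbr G x ↔ v = x ∨ G.Adj x v := Iff.rfl

theorem self_mem_cnbr (G : SimpleGraph V) (x : V) : x ∈ cnbr G x := Set.mem_insert _ _

theorem mem_cnbr_comm : v ∈ cnbr G x ↔ x ∈ cnbr G v := by
  rw [mem_cnbr, mem_cnbr, eq_comm, G.adj_comm]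

theorem mem_cnbrSet : u ∈ cnbrSet G D ↔ (cnbr G u ∩ D).Nonempty := by
  simp only [cnbrSet, Set.mem_iUnion, exists_prop, Set.Nonempty, Set.mem_inter_iff,
    mem_cnbr_comm (v := u), and_comm]

theorem cnbrSet_mono (h : D ⊆ D') : cnbrSet G D ⊆ cnbrSet G D' :=
  Set.biUnion_mono h fun _ _ => le_rfl

theorem Dominates.mono (h : Dominates G D X) (hD : D ⊆ D') (hX : Y ⊆ X) : Dominates G D' Y :=
  hX.trans (h.trans (cnbrSet_mono hD))

theorem dominates_union_left : Dominates G (A ∪ I) X ↔ Dominates G I (X \ cnbrSet G A) := by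
  rw [Dominates, Dominates, cnbrSet, Set.biUnion_union, Set.sdiff_subset_iff]
  rfl

theorem priv_eq_sdiff (G : SimpleGraph V) (D : Set V) (x : V) :
    priv G D x = cnbrSet G D \ cnbrSet G (D \ {x}) := by
  ext u
  simp only [priv, Set.mem_ofPred_eq, Set.mem_sdiff, mem_cnbrSet,
    Set.eq_singleton_iff_nonempty_unique_mem]
  simp only [Set.Nonempty, Set.mem_inter_iff, Set.mem_sdiff, Set.mem_singleton_iff]
  grind

theorem priv_union (hx : x ∉ E) : priv G (D ∪ E) x = priv G D x \ cnbrSet G E := by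
  ext u
  simp only [priv, Set.mem_sdiff, mem_cnbrSet, Set.Nonempty, Set.ext_iff, Set.mem_ofPred_eq,
    Set.mem_inter_iff, Set.mem_union, Set.mem_singleton_iff]
  grind

theorem minimal_dominates_iff :
    Minimal (Dominates G · X) D ↔ Dominates G D X ∧ ∀ x ∈ D, (priv G D x ∩ X).Nonempty := by
  rw [Set.minimal_iff_forall_sdiff_singleton fun _ _ h hsub => h.mono hsub le_rfl]
  refine and_congr_right fun h => forall₂_congr fun x _ => ?_
  rw [priv_eq_sdiff, Set.sdiff_inter_right_comm, Set.inter_eq_right.2 h, Set.sdiff_nonempty]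
  rfl

theorem isMinDomSet_iff_minimal : IsMinDomSet G D ↔ Minimal (Dominates G · Set.univ) D :=
  (Set.minimal_iff_forall_ssubset (P := (Dominates G · Set.univ))).symm

theorem minimal_dominates_union_iff (h : Disjoint A I) :
    Minimal (Dominates G · X) (A ∪ I) ↔
      Minimal (Dominates G · (X \ cnbrSet G A)) I ∧
        ∀ a ∈ A, ¬ Dominates G I (priv G A a ∩ X) := by
  have hA : ∀ a ∈ A, (priv G (A ∪ I) a ∩ X).Nonempty ↔ ¬ Dominates G I (priv G A a ∩ X) := by
    intro a ha
    rw [priv_union (Set.disjoint_left.1 h ha), Set.sdiff_inter_right_comm, Set.sdiff_nonempty]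
    rfl
  have hI : ∀ x ∈ I, priv G (A ∪ I) x ∩ X = priv G I x ∩ (X \ cnbrSet G A) := by
    intro x hx
    rw [Set.union_comm, priv_union (Set.disjoint_right.1 h hx), Set.sdiff_inter_right_comm,
      Set.inter_sdiff_assoc]
  simp only [minimal_dominates_iff, dominates_union_left, Set.mem_union, or_imp, forall_and]
  grind

end Domination

section Components

variable {G : SimpleGraph V} {S C C' D T X : Set V} {u x w : V}

theorem exists_isCompOf_mem (G : SimpleGraph V) (hx : x ∈ S) : ∃ C, IsCompOf G S C ∧ x ∈ C := by
  let K := (G.induce S).connectedComponentMk ⟨x, hx⟩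
  have hxK : x ∈ Subtype.val '' K.supp := ⟨_, rfl, rfl⟩
  refine ⟨Subtype.val '' K.supp, ⟨?_, ⟨x, hxK⟩, ?_, ?_⟩, hxK⟩
  · rintro _ ⟨y, -, rfl⟩
    exact y.2
  · let f : K.toSimpleGraph →g G.induce (Subtype.val '' K.supp) :=
      ⟨fun y => ⟨y.1, y.1, y.2, rfl⟩, id⟩
    refine K.connected_toSimpleGraph.map f ?_
    rintro ⟨_, y, hy, rfl⟩
    exact ⟨⟨y, hy⟩, rfl⟩
  · rintro _ ⟨y, hy, rfl⟩ z hz hyz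
    exact ⟨⟨z, hz⟩, K.mem_supp_of_adj_mem_supp hy hyz, rfl⟩

theorem exists_adj_mem_notMem (hC : (G.induce C).Connected) (hu : u ∈ C) (huT : u ∈ T)
    (hw : w ∈ C) (hwT : w ∉ T) : ∃ p ∈ C, ∃ q ∈ C, G.Adj p q ∧ p ∈ T ∧ q ∉ T := by
  obtain ⟨W⟩ := hC.preconnected ⟨u, hu⟩ ⟨w, hw⟩
  obtain ⟨d, -, hp, hq⟩ := W.exists_boundary_dart (Subtype.val ⁻¹' T) huT hwT
  exact ⟨_, d.fst.2, _, d.snd.2, d.adj, hp, hq⟩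

theorem IsCompOf.subset_of_mem (hC : IsCompOf G S C) (hC' : IsCompOf G S C') (hx : x ∈ C)
    (hx' : x ∈ C') : C ⊆ C' := by
  by_contra h
  obtain ⟨w, hw, hw'⟩ := Set.not_subset.1 h
  obtain ⟨p, -, q, hq, hpq, hp', hq'⟩ := exists_adj_mem_notMem hC.2.2.1 hx hx' hw hw'
  exact hq' (hC'.2.2.2 p hp' q (hC.1 hq) hpq)

theorem IsCompOf.cnbr_inter_subset (hC : IsCompOf G S C) (hx : x ∈ C) : cnbr G x ∩ S ⊆ C := by
  rintro y ⟨rfl | hxy, hy⟩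
  · exact hx
  · exact hC.2.2.2 x hx y hy hxy

theorem IsCompOf.cnbr_inter_inter (hC : IsCompOf G S C) (hD : D ⊆ S) (hu : u ∈ C) :
    cnbr G u ∩ (D ∩ C) = cnbr G u ∩ D := by
  rw [← Set.inter_assoc, Set.inter_eq_left]
  exact (Set.inter_subset_inter_right _ hD).trans (hC.cnbr_inter_subset hu)

theorem IsCompOf.dominates_inter_iff (hC : IsCompOf G S C) (hD : D ⊆ S) (hX : X ⊆ C) :
    Dominates G (D ∩ C) X ↔ Dominates G D X := by
  refine forall₂_congr fun u hu => ?_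
  rw [mem_cnbrSet, mem_cnbrSet, hC.cnbr_inter_inter hD (hX hu)]

theorem IsCompOf.mem_priv_inter_iff (hC : IsCompOf G S C) (hD : D ⊆ S) (hu : u ∈ C) :
    u ∈ priv G (D ∩ C) x ↔ u ∈ priv G D x := by
  rw [priv, priv, Set.mem_ofPred_eq, Set.mem_ofPred_eq, hC.cnbr_inter_inter hD hu]

theorem mem_cnbr_of_mem_priv (hu : u ∈ priv G D x) : u ∈ cnbr G x :=
  mem_cnbr_comm.2 (Set.inter_subset_left (Eq.superset hu rfl))

theorem minimal_dominates_iff_forall_isCompOf (hD : D ⊆ S) (hX : X ⊆ S) :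
    Minimal (Dominates G · X) D ↔
      ∀ C, IsCompOf G S C → Minimal (Dominates G · (X ∩ C)) (D ∩ C) := by
  simp only [minimal_dominates_iff]
  constructor
  · rintro ⟨hdom, hpriv⟩ C hC
    refine ⟨(hC.dominates_inter_iff hD Set.inter_subset_right).2
      (hdom.mono le_rfl Set.inter_subset_left), fun x hx => ?_⟩
    obtain ⟨u, hu, huX⟩ := hpriv x hx.1
    have huC : u ∈ C := hC.cnbr_inter_subset hx.2 ⟨mem_cnbr_of_mem_priv hu, hX huX⟩
    exact ⟨u, (hC.mem_priv_inter_iff hD huC).2 hu, huX, huC⟩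
  · intro h
    refine ⟨fun u hu => ?_, fun x hx => ?_⟩
    · obtain ⟨C, hC, huC⟩ := exists_isCompOf_mem G (hX hu)
      exact (h C hC).1.mono Set.inter_subset_left le_rfl ⟨hu, huC⟩
    · obtain ⟨C, hC, hxC⟩ := exists_isCompOf_mem G (hD hx)
      obtain ⟨u, hu, huX, huC⟩ := (h C hC).2 x ⟨hx, hxC⟩
      exact ⟨u, (hC.mem_priv_inter_iff hD huC).1 hu, huX⟩

end Components

section ChordalPaths

variable {G : SimpleGraph V} {f g : ℕ → V} {m n : ℕ} {a : V}

theorem zmod_eq_add_one_iff (hn : 1 ≤ n) {k l : ZMod (n + 1)} :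
    k = l + 1 ↔ k.val = l.val + 1 ∨ (k.val = 0 ∧ l.val = n) := by
  have : Fact (1 < n + 1) := ⟨by lia⟩
  have hk := k.val_lt
  have hl := Nat.le_of_lt_succ l.val_lt
  rw [← (ZMod.val_injective (n + 1)).eq_iff, ZMod.val_add, ZMod.val_one]
  rcases hl.eq_or_lt with h | h
  · rw [h, Nat.mod_self]
    lia
  · rw [Nat.mod_eq_of_lt (by lia)]
    lia

theorem Chordal.not_adj_of_induced_path (hch : Chordal G) (hn : 3 ≤ n)
    (hadj : ∀ i, i + 1 ≤ n → G.Adj (f i) (f (i + 1)))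
    (hnadj : ∀ i j, i + 2 ≤ j → j ≤ n → (i, j) ≠ (0, n) → Gᶜ.Adj (f i) (f j))
    (hne : f 0 ≠ f n) : ¬ G.Adj (f 0) (f n) := by
  intro hclose
  have hpair : ∀ i j, i < j → j ≤ n →
      f i ≠ f j ∧ (G.Adj (f i) (f j) ↔ j = i + 1 ∨ (i = 0 ∧ j = n)) := by
    intro i j hij hj
    obtain rfl | h | ⟨h, hends⟩ :
        j = i + 1 ∨ (i = 0 ∧ j = n) ∨ i + 2 ≤ j ∧ ¬ (i = 0 ∧ j = n) := by lia
    · exact ⟨(hadj i hj).ne, iff_of_true (hadj i hj) (Or.inl rfl)⟩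
    · obtain ⟨rfl, rfl⟩ := h
      exact ⟨hne, iff_of_true hclose (Or.inr ⟨rfl, rfl⟩)⟩
    · have hij := hnadj i j h hj (by simpa using hends)
      exact ⟨hij.ne, iff_of_false hij.2 (by lia)⟩
  have hle : ∀ k : ZMod (n + 1), k.val ≤ n := fun k => Nat.le_of_lt_succ k.val_lt
  refine hch (n + 1) (by lia) ⟨fun k => f k.val, fun k l hkl => ?_, fun k l => ?_⟩
  · apply ZMod.val_injective (n + 1)
    by_contra h
    rcases Nat.lt_or_gt_of_ne h with h | h
    · exact (hpair _ _ h (hle l)).1 hkl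
    · exact (hpair _ _ h (hle k)).1 hkl.symm
  · rw [zmod_eq_add_one_iff (by lia), zmod_eq_add_one_iff (by lia)]
    rcases lt_trichotomy k.val l.val with h | h | h
    · rw [(hpair _ _ h (hle l)).2]
      lia
    · simp only [h, G.irrefl]
      lia
    · rw [G.adj_comm, (hpair _ _ h (hle k)).2]
      lia

/-- A sequence `f 0, …, f n` that looks like an induced path at distance at most two: consecutive
vertices are adjacent, vertices two steps apart are distinct and nonadjacent. -/
structure IsLocalPath (G : SimpleGraph V) (f : ℕ → V) (n : ℕ) : Prop where
  adj : ∀ i, i + 1 ≤ n → G.Adj (f i) (f (i + 1))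
  compl_adj : ∀ i, i + 2 ≤ n → Gᶜ.Adj (f i) (f (i + 2))

-- A shortest chord would close an induced cycle.
theorem Chordal.compl_adj_of_isLocalPath (hch : Chordal G) (hf : IsLocalPath G f n) {i j : ℕ}
    (hij : i + 2 ≤ j) (hj : j ≤ n) : Gᶜ.Adj (f i) (f j) := by
  obtain ⟨d, rfl⟩ := Nat.exists_eq_add_of_le (show i ≤ j by lia)
  induction d using Nat.strong_induction_on generalizing i with
  | _ d ih =>
    obtain rfl | hd : d = 2 ∨ 3 ≤ d := by lia
    · exact hf.compl_adj i hj
    have hadj : ∀ a, a + 1 ≤ d → G.Adj (f (i + a)) (f (i + (a + 1))) :=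
      fun a ha => hf.adj (i + a) (by lia)
    have hnadj : ∀ a b, a + 2 ≤ b → b ≤ d → (a, b) ≠ (0, d) → Gᶜ.Adj (f (i + a)) (f (i + b)) := by
      intro a b hab hb hne
      have := ih (b - a) (by grind) (i := i + a) (by lia) (by lia)
      rwa [show i + a + (b - a) = i + b by lia] at this
    have hends : f i ≠ f (i + d) := by
      intro h
      have hprev := hadj (d - 1) (by lia)
      rw [show d - 1 + 1 = d by lia, ← h] at hprev
      exact (hnadj 0 (d - 1) (by lia) (by lia) (by grind)).2 hprev.symm
    exact ⟨hends, hch.not_adj_of_induced_path (f := fun k => f (i + k)) hd hadj hnadj hends⟩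

theorem PkFree.not_isLocalPath (hP : PkFree G (n + 1)) (hch : Chordal G) :
    ¬ IsLocalPath G f n := by
  intro hf
  have hpair : ∀ i j, i < j → j ≤ n → f i ≠ f j ∧ (G.Adj (f i) (f j) ↔ i + 1 = j) := by
    intro i j hij hj
    obtain rfl | h : j = i + 1 ∨ i + 2 ≤ j := by lia
    · exact ⟨(hf.adj i hj).ne, iff_of_true (hf.adj i hj) rfl⟩
    · have hij := hch.compl_adj_of_isLocalPath hf h hj
      exact ⟨hij.ne, iff_of_false hij.2 (by lia)⟩
  refine hP ⟨fun i => f i.val,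
    .of_lt_imp_ne fun i j hij => (hpair i j hij (by lia)).1, fun i j => ?_⟩
  rcases lt_trichotomy i.val j.val with h | h | h
  · rw [(hpair i j h (by lia)).2]
    lia
  · simp only [h, G.irrefl]
    lia
  · rw [G.adj_comm, (hpair j i h (by lia)).2]
    lia

theorem isLocalPath_zero (G : SimpleGraph V) (f : ℕ → V) : IsLocalPath G f 0 :=
  ⟨fun _ h => absurd h (by lia), fun _ h => absurd h (by lia)⟩

theorem IsLocalPath.cons (hf : IsLocalPath G f n) (hadj : G.Adj a (f 0))
    (hskip : 1 ≤ n → Gᶜ.Adj a (f 1)) : IsLocalPath G (fun i => i.casesOn a f) (n + 1) where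
  adj
    | 0, _ => hadj
    | i + 1, h => hf.adj i (by lia)
  compl_adj
    | 0, h => hskip (by lia)
    | i + 1, h => hf.compl_adj i (by lia)

theorem IsLocalPath.join (hf : IsLocalPath G f m) (hg : IsLocalPath G g n) (h0 : f 0 = g 0)
    (h1 : Gᶜ.Adj (f 1) (g 1)) :
    IsLocalPath G (fun i => if i ≤ m then f (m - i) else g (i - m)) (m + n) where
  adj i hi := by
    obtain h | h : i + 1 ≤ m ∨ m ≤ i := by lia
    · have := hf.adj (m - (i + 1)) (by lia)
      rw [show m - (i + 1) + 1 = m - i by lia] at this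
      simpa [h, show i ≤ m by lia] using this.symm
    · obtain ⟨d, rfl⟩ := Nat.exists_eq_add_of_le h
      have := hg.adj d (by lia)
      grind
  compl_adj i hi := by
    obtain h | rfl | h : i + 2 ≤ m ∨ m = i + 1 ∨ m ≤ i := by lia
    · have := hf.compl_adj (m - (i + 2)) (by lia)
      grind [SimpleGraph.adj_comm]
    · simpa using h1
    · obtain ⟨d, rfl⟩ := Nat.exists_eq_add_of_le h
      have := hg.compl_adj d (by lia)
      grind

end ChordalPaths

section Irredundant

variable {G : SimpleGraph V} {IR C C' D : Set V} {a p q x y : V}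

theorem IsIrredundantSet.dominates_univ_iff (hIR : IsIrredundantSet G IR) :
    Dominates G D Set.univ ↔ Dominates G D IR := by
  refine ⟨fun h => h.mono le_rfl (Set.subset_univ _), fun h v _ => ?_⟩
  obtain ⟨x, hx, hxv⟩ := hIR.1 v
  exact mem_cnbrSet.2 ((mem_cnbrSet.1 (h hx)).mono (Set.inter_subset_inter_left _ hxv))

theorem IsIrredundantSet.exists_adj_compl_adj (hIR : IsIrredundantSet G IR) (hx : x ∈ IR)
    (hy : y ∈ IR) (hxy : G.Adj x y) : ∃ z, G.Adj y z ∧ Gᶜ.Adj x z := by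
  have hsub : ¬ cnbr G y ⊆ cnbr G x := fun h =>
    hIR.2.1 x hx y (h.ssubset_of_ne (hIR.2.2 y hy x hx hxy.ne'))
  obtain ⟨z, hyz, hxz⟩ := Set.not_subset.1 hsub
  rw [mem_cnbr, not_or] at hxz
  rcases hyz with rfl | hyz
  · exact absurd hxy hxz.2
  · exact ⟨z, hyz, Ne.symm hxz.1, hxz.2⟩

theorem IsIrredundantSet.exists_two_step_extension (hIR : IsIrredundantSet G IR) (hp : p ∈ IR)
    (hq : q ∈ IR) (hpq : G.Adj p q) :
    ∃ y z, G.Adj q y ∧ G.Adj y z ∧ Gᶜ.Adj p y ∧ Gᶜ.Adj q z := by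
  obtain ⟨z, hqz, hpz⟩ := hIR.exists_adj_compl_adj hp hq hpq
  obtain ⟨r, hr, hrz⟩ := hIR.1 z
  have hpr : p ∉ cnbr G r := fun h => by
    rcases hrz h with rfl | h
    · exact hpz.ne rfl
    · exact hpz.2 h.symm
  rw [mem_cnbr, not_or] at hpr
  by_cases hqr : q ∈ cnbr G r
  · have hrq : G.Adj q r := by
      rcases hqr with rfl | h
      · exact absurd hpq.symm hpr.2
      · exact h.symm
    obtain ⟨t, hrt, hqt⟩ := hIR.exists_adj_compl_adj hq hr hrq
    exact ⟨r, t, hrq, hrt, ⟨hpr.1, fun h => hpr.2 h.symm⟩, hqt⟩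
  · have hzr : G.Adj z r := by
      rcases hrz (self_mem_cnbr G r) with rfl | h
      · exact absurd (Or.inr hqz.symm) hqr
      · exact h
    rw [mem_cnbr, not_or] at hqr
    exact ⟨z, r, hqz, hzr, hpz, hqr.1, fun h => hqr.2 h.symm⟩

/-- `a` is mixed on `C` if it has both a neighbor and a nonneighbor in `C`. -/
def IsMixedOn (G : SimpleGraph V) (a : V) (C : Set V) : Prop :=
  (∃ u ∈ C, G.Adj a u) ∧ ∃ w ∈ C, ¬ G.Adj a w

theorem IsMixedOn.exists_isLocalPath (hmix : IsMixedOn G a C) (hIR : IsIrredundantSet G IR)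
    (hC : IsCompOf G IR C) (ha : a ∉ IR) :
    ∃ f : ℕ → V, IsLocalPath G f 4 ∧ f 0 = a ∧ f 1 ∈ C := by
  obtain ⟨⟨u, hu, hau⟩, w, hw, haw⟩ := hmix
  obtain ⟨p, hp, q, hq, hpq, hap, haq⟩ :=
    exists_adj_mem_notMem (T := G.neighborSet a) hC.2.2.1 hu hau hw haw
  obtain ⟨y, z, hqy, hyz, hpy, hqz⟩ := hIR.exists_two_step_extension (hC.1 hp) (hC.1 hq) hpq
  have haq' : Gᶜ.Adj a q := ⟨fun h => ha (h ▸ hC.1 hq), haq⟩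
  have hz := isLocalPath_zero G fun _ => z
  have hyz' := hz.cons hyz (by lia)
  have hqyz := hyz'.cons hqy fun _ => hqz
  have hpqyz := hqyz.cons hpq fun _ => hpy
  exact ⟨_, hpqyz.cons hap fun _ => haq', rfl, hp⟩

theorem IsMixedOn.isCompOf_subset (hmix : IsMixedOn G a C) (hmix' : IsMixedOn G a C')
    (hch : Chordal G) (hP9 : PkFree G 9) (hIR : IsIrredundantSet G IR)
    (hC : IsCompOf G IR C) (hC' : IsCompOf G IR C') (ha : a ∉ IR) : C' ⊆ C := by
  obtain ⟨f, hf, hf0, hf1⟩ := hmix.exists_isLocalPath hIR hC ha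
  obtain ⟨g, hg, hg0, hg1⟩ := hmix'.exists_isLocalPath hIR hC' ha
  by_contra hsub
  have hne : g 1 ∉ C := fun h => hsub (hC'.subset_of_mem hC hg1 h)
  have h1 : Gᶜ.Adj (f 1) (g 1) :=
    ⟨fun h => hne (h ▸ hf1), fun h => hne (hC.2.2.2 _ hf1 _ (hC'.1 hg1) h)⟩
  exact hP9.not_isLocalPath hch (hf.join hg (hf0.trans hg0.symm) h1)

end Irredundant

section Extensions

variable {G : SimpleGraph V} {IR A C D I X : Set V} {a : V}

theorem sdiff_onbrSet_of_disjoint (h : Disjoint X A) : X \ onbrSet G A = X \ cnbrSet G A := by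
  rw [onbrSet, Set.sdiff_sdiff_right, h.inter_eq, Set.union_empty]

theorem isMinDomSet_union_iff (hIR : IsIrredundantSet G IR) (hA : A ⊆ IRᶜ) (hI : I ⊆ IR) :
    IsMinDomSet G (A ∪ I) ↔
      (∀ C, IsCompOf G IR C → Minimal (Dominates G · (C \ onbrSet G A)) (I ∩ C)) ∧
        ∀ a ∈ A, ¬ Dominates G I (privIR G IR A a) := by
  have hAIR : Disjoint IR A := (Set.disjoint_left.2 hA).symm
  simp only [isMinDomSet_iff_minimal, hIR.dominates_univ_iff,
    minimal_dominates_union_iff (hAIR.symm.mono_right hI)]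
  rw [← sdiff_onbrSet_of_disjoint hAIR,
    minimal_dominates_iff_forall_isCompOf hI Set.sdiff_subset]
  refine and_congr_left' (forall₂_congr fun C hC => ?_)
  rw [← Set.inter_sdiff_right_comm, Set.inter_eq_right.2 hC.1]

theorem minimal_and_iff_of_antitone {α : Type*} [Preorder α] {P Q : α → Prop} (hQ : Antitone Q)
    {x : α} : Minimal (fun y => P y ∧ Q y) x ↔ Minimal P x ∧ Q x :=
  ⟨fun h => ⟨⟨h.prop.1, fun _ hy hyx => h.le_of_le ⟨hy, hQ hyx h.prop.2⟩ hyx⟩, h.prop.2⟩,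
    fun h => h.1.and_right h.2⟩

/-- The paper's condition on `D ⊆ C` for an irredundant component `C = C_i`: `D` dominates
`C \ N(A)` but no `Priv_IR(A, x)` with `x ∈ R_i(A)`. -/
def IsLocalExtension (G : SimpleGraph V) (IR A C D : Set V) : Prop :=
  Dominates G D (C \ onbrSet G A) ∧
    ∀ x ∈ A \ Bset G IR A, (privIR G IR A x ∩ C).Nonempty → ¬ Dominates G D (privIR G IR A x)

theorem minimal_isLocalExtension_iff :
    Minimal (IsLocalExtension G IR A C) D ↔
      Minimal (Dominates G · (C \ onbrSet G A)) D ∧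
        ∀ x ∈ A \ Bset G IR A, (privIR G IR A x ∩ C).Nonempty →
          ¬ Dominates G D (privIR G IR A x) :=
  minimal_and_iff_of_antitone fun _ _ hsub h x hx hxC hdom => h x hx hxC (hdom.mono hsub le_rfl)

theorem isMixedOn_of_notMem_Bset (hA : A ⊆ IRᶜ) (ha : a ∈ A \ Bset G IR A)
    (hC : IsCompOf G IR C) (hne : (privIR G IR A a ∩ C).Nonempty) : IsMixedOn G a C := by
  have ⟨u, hu, huC⟩ := hne
  refine ⟨⟨u, huC, (mem_cnbr_of_mem_priv hu.1).resolve_left fun h => hA ha.1 (h ▸ hu.2)⟩, ?_⟩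
  by_contra! hall
  refine ha.2 ⟨ha.1, C, hC, fun w hw => ⟨?_, fun hwA => hA hwA (hC.1 hw)⟩, hne⟩
  exact mem_cnbrSet.2 ⟨a, Or.inr (hall w hw).symm, ha.1⟩

theorem privIR_subset_of_notMem_Bset (hch : Chordal G) (hP9 : PkFree G 9)
    (hIR : IsIrredundantSet G IR) (hA : A ⊆ IRᶜ) (ha : a ∈ A \ Bset G IR A)
    (hC : IsCompOf G IR C) (hne : (privIR G IR A a ∩ C).Nonempty) : privIR G IR A a ⊆ C := by
  intro v hv
  obtain ⟨C', hC', hvC'⟩ := exists_isCompOf_mem G hv.2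
  have hmix := isMixedOn_of_notMem_Bset hA ha hC hne
  have hmix' := isMixedOn_of_notMem_Bset hA ha hC' ⟨v, hv, hvC'⟩
  exact hmix.isCompOf_subset hmix' hch hP9 hIR hC hC' (hA ha.1) hvC'

theorem not_dominates_privIR_of_mem_Bset (hI : I ⊆ IR) (ha : a ∈ Bset G IR A)
    (hmin : ∀ C, IsCompOf G IR C → Minimal (Dominates G · (C \ onbrSet G A)) (I ∩ C)) :
    ¬ Dominates G I (privIR G IR A a) := by
  obtain ⟨-, C, hC, hCA, u, hu, huC⟩ := ha
  have hIC : I ∩ C = ∅ := by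
    refine Set.subset_empty_iff.1 ((hmin C hC).le_of_le ?_ (Set.empty_subset _))
    rw [Set.sdiff_eq_empty.2 hCA]
    exact Set.empty_subset _
  intro hdom
  have hu' := (hC.dominates_inter_iff hI Set.inter_subset_right).2
    (hdom.mono le_rfl Set.inter_subset_left) ⟨hu, huC⟩
  simp [hIC, mem_cnbrSet] at hu'

theorem memDRN.subset_compl (hA : memDRN G IR A) : A ⊆ IRᶜ := by
  obtain ⟨D, -, rfl⟩ := hA
  exact Set.inter_subset_right

theorem memDRN.privIR_nonempty (hA : memDRN G IR A) (hIR : IsIrredundantSet G IR) :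
    ∀ a ∈ A, (privIR G IR A a).Nonempty := by
  obtain ⟨D, hD, rfl⟩ := hA
  rw [← Set.inter_union_compl D IR, Set.union_comm,
    isMinDomSet_union_iff hIR Set.inter_subset_right Set.inter_subset_right] at hD
  refine fun a ha => Set.nonempty_iff_ne_empty.2 fun h => hD.2 a ha ?_
  rw [h]
  exact Set.empty_subset _

end Extensions

theorem stmt_9_general {G : SimpleGraph V} (hch : Chordal G) (hP9 : PkFree G 9) {IR A I : Set V}
    (hIR : IsIrredundantSet G IR) (hA : A ⊆ IRᶜ) (hpriv : ∀ a ∈ A, (privIR G IR A a).Nonempty)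
    (hI : I ⊆ IR) :
    IsMinDomSet G (A ∪ I) ↔
      ∀ C : Set V, IsCompOf G IR C → Minimal (IsLocalExtension G IR A C) (I ∩ C) := by
  simp only [isMinDomSet_union_iff hIR hA hI, minimal_isLocalExtension_iff]
  constructor
  · exact fun ⟨hmin, hnd⟩ C hC =>
      ⟨hmin C hC, fun a ha _ hdom => hnd a ha.1 (hdom.mono Set.inter_subset_left le_rfl)⟩
  · refine fun h => ⟨fun C hC => (h C hC).1, fun a ha hdom => ?_⟩
    by_cases haB : a ∈ Bset G IR A
    · exact not_dominates_privIR_of_mem_Bset hI haB (fun C hC => (h C hC).1) hdom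
    · obtain ⟨u, hu⟩ := hpriv a ha
      obtain ⟨C, hC, huC⟩ := exists_isCompOf_mem G hu.2
      have hsub := privIR_subset_of_notMem_Bset hch hP9 hIR hA ⟨ha, haB⟩ hC ⟨u, hu, huC⟩
      exact (h C hC).2 a ⟨ha, haB⟩ ⟨u, hu, huC⟩ ((hC.dominates_inter_iff hI hsub).2 hdom)

/-- In a `P₉`-free chordal graph, for `A ∈ D_RN(G)` and `I ⊆ IR`, the set
`A ∪ I` is a minimal dominating set iff for every irredundant component `C`, `I ∩ C` is an
inclusion-minimal subset of `C` dominating `C \ N(A)` without dominating `Priv_IR(A, x)` for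
any `x ∈ R_i(A)`. -/
theorem stmt_9 [Fintype V] (G : SimpleGraph V) (hch : Chordal G) (hP9 : PkFree G 9)
    (IR : Set V) (hIR : IsIrredundantSet G IR)
    (A : Set V) (hA : memDRN G IR A) (I : Set V) (hI : I ⊆ IR) :
    IsMinDomSet G (A ∪ I) ↔
      ∀ C : Set V, IsCompOf G IR C →
        (Dominates G (I ∩ C) (C \ onbrSet G A) ∧
          (∀ x ∈ A \ Bset G IR A, (privIR G IR A x ∩ C).Nonempty →
            ¬ Dominates G (I ∩ C) (privIR G IR A x)) ∧
          ∀ D : Set V, D ⊂ I ∩ C →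
            ¬ (Dominates G D (C \ onbrSet G A) ∧
                ∀ x ∈ A \ Bset G IR A, (privIR G IR A x ∩ C).Nonempty →
                  ¬ Dominates G D (privIR G IR A x))) := by
  simpa only [Set.minimal_iff_forall_ssubset, IsLocalExtension, and_assoc] using
    stmt_9_general hch hP9 hIR hA.subset_compl (hA.privIR_nonempty hIR) hI
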